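/- arXiv:2503.22636 — 2 statements merged into one kernel-verified Lean document; each statement's English description precedes it below -/
import Mathlib

section
/- Let Σ be a rational fan in N_ℝ and let f_1,…,f_k, g_1,…,g_ℓ be integral piecewise-linear functions on Σ. Then the equality of functions ∑_{i=1}^k e^{f_i} = ∑_{j=1}^ℓ e^{g_j} on |Σ| holds if and only if for every point v ∈ |Σ| there is an equality of multisets {f_1(v),…,f_k(v)} = {g_1(v),…,g_ℓ(v)}. In particular this forces k = ℓ. -/
open scoped BigOperators Pointwise

namespace EhrhartFormalization

/-- The ambient real vector space `N_ℝ ≅ ℝⁿ`, with lattice `N = ℤⁿ`. -/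
abbrev V (n : ℕ) : Type := Fin n → ℝ

/-- The real point associated to a lattice point. -/
def toR {n : ℕ} (u : Fin n → ℤ) : V n := fun i => (u i : ℝ)

/-- The pairing of an integral linear functional `m ∈ M` with a point of `N_ℝ`. -/
def pairR {n : ℕ} (m : Fin n → ℤ) (v : V n) : ℝ := ∑ i, (m i : ℝ) * v i

/-- The pairing of an integral linear functional with a lattice point. -/
def pairZ {n : ℕ} (m u : Fin n → ℤ) : ℤ := ∑ i, m i * u i

/-- A rational cone: a finite intersection of closed rational halfspaces. -/
def IsRationalCone {n : ℕ} (σ : Set (V n)) : Prop :=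
  ∃ s : Finset (Fin n → ℤ), σ = {v | ∀ m ∈ s, 0 ≤ pairR m v}

/-- `τ` is a face of `σ`: it is cut out by an integral linear functional that is
nonpositive on `σ`. -/
def IsFaceOf {n : ℕ} (τ σ : Set (V n)) : Prop :=
  ∃ m : Fin n → ℤ, (∀ v ∈ σ, pairR m v ≤ 0) ∧ τ = {v ∈ σ | pairR m v = 0}

/-- A rational fan in `N_ℝ`. -/
structure RationalFan (n : ℕ) where
  cones : Set (Set (V n))
  finite : cones.Finite
  rational : ∀ σ ∈ cones, IsRationalCone σ
  face_mem : ∀ σ ∈ cones, ∀ τ : Set (V n), IsFaceOf τ σ → τ ∈ cones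
  inter_face : ∀ σ₁ ∈ cones, ∀ σ₂ ∈ cones, IsFaceOf (σ₁ ∩ σ₂) σ₁

/-- The support of a fan: the union of its cones. -/
def RationalFan.support {n : ℕ} (S : RationalFan n) : Set (V n) := ⋃ σ ∈ S.cones, σ

/-- The dimension of a cone. -/
noncomputable def dimCone {n : ℕ} (σ : Set (V n)) : ℕ :=
  Module.finrank ℝ (Submodule.span ℝ σ)

/-- The set `Σ(k)` of `k`-dimensional cones of a fan. -/
def RationalFan.conesDim {n : ℕ} (S : RationalFan n) (k : ℕ) : Set (Set (V n)) :=
  {σ | σ ∈ S.cones ∧ dimCone σ = k}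

/-- The rays (`1`-dimensional cones) of a fan. -/
def RationalFan.rays {n : ℕ} (S : RationalFan n) : Set (Set (V n)) :=
  S.conesDim 1

/-- The dimension of a fan: the largest dimension of any of its cones. -/
noncomputable def RationalFan.dim {n : ℕ} (S : RationalFan n) : ℕ :=
  sSup (dimCone '' S.cones)

/-- `u` is the primitive ray generator of the ray `ρ`: the lattice point of `ρ`
generating `ρ ∩ N` as a monoid. -/
def IsRayGenOf {n : ℕ} (ρ : Set (V n)) (u : Fin n → ℤ) : Prop :=
  toR u ∈ ρ ∧ u ≠ 0 ∧ ∀ w : Fin n → ℤ, toR w ∈ ρ → ∃ c : ℕ, w = c • u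

open Classical in
/-- The primitive generator of a ray (junk value `0` if none exists). -/
noncomputable def rayGen {n : ℕ} (ρ : Set (V n)) : Fin n → ℤ :=
  if h : ∃ u, IsRayGenOf ρ u then h.choose else 0

/-- A unimodular cone: generated by part of a `ℤ`-basis of the lattice. -/
def IsUnimodularCone {n : ℕ} (σ : Set (V n)) : Prop :=
  ∃ (b : Module.Basis (Fin n) ℤ (Fin n → ℤ)) (k : ℕ), k ≤ n ∧
    σ = {v | ∃ c : Fin n → ℝ, (∀ i, 0 ≤ c i) ∧ (∀ i : Fin n, k ≤ (i : ℕ) → c i = 0) ∧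
          v = ∑ i, c i • toR (b i)}

/-- A unimodular fan: a pointed fan all of whose cones are unimodular. -/
def IsUnimodular {n : ℕ} (S : RationalFan n) : Prop :=
  ({0} : Set (V n)) ∈ S.cones ∧ ∀ σ ∈ S.cones, IsUnimodularCone σ

/-- A complete fan: its support is all of `N_ℝ`. -/
def IsComplete {n : ℕ} (S : RationalFan n) : Prop := S.support = Set.univ

/-- For a unimodular fan, `PL(Σ) = ℤ^{Σ(1)}`; this is the element of `PL(Σ)`
obtained by restricting an integral linear function `m ∈ M`, recorded by its
values at the primitive ray generators. -/
noncomputable def linPL {n : ℕ} (S : RationalFan n) (m : Fin n → ℤ) : ↥S.rays → ℤ :=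
  fun ρ => pairZ m (rayGen (ρ : Set (V n)))

open Classical in
/-- The Courant function of a ray: value `1` at `u_ρ₀` and `0` at other ray generators. -/
noncomputable def courant {n : ℕ} (S : RationalFan n) (ρ₀ : ↥S.rays) : ↥S.rays → ℤ :=
  fun ρ => if ρ = ρ₀ then 1 else 0

/-- The neighborhood `Σ^{(σ)}` of a cone: all cones contained in a cone containing `σ`. -/
def RationalFan.nbhd {n : ℕ} (S : RationalFan n) (σ : Set (V n)) : Set (Set (V n)) :=
  {τ | τ ∈ S.cones ∧ ∃ σ' ∈ S.cones, σ ⊆ σ' ∧ τ ⊆ σ'}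

/-- `T` is the star fan of `S` at the cone `σ`, realized via the lattice-compatible
surjection `π` whose kernel is the span of `σ`. -/
def IsStarMap {n m : ℕ} (S : RationalFan n) (σ : Set (V n)) (π : V n →ₗ[ℝ] V m)
    (T : RationalFan m) : Prop :=
  Function.Surjective π ∧
  (∀ u : Fin n → ℤ, ∃ w : Fin m → ℤ, π (toR u) = toR w) ∧
  (∀ w : Fin m → ℤ, ∃ u : Fin n → ℤ, π (toR u) = toR w) ∧
  LinearMap.ker π = Submodule.span ℝ σ ∧
  T.cones = (Set.image π) '' S.nbhd σ

/-- The recursive system of conditions defining Ehrhart fans: `χ` descends to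
`uPL(Σ) = PL(Σ)/L(Σ)`, is normalized by `χ(0) = 1`, and for every ray `ρ` there is a
star fan (with its own Ehrhart function `χT`, recursively) along which the Ehrhart
recursion `χ([f]) = χ([f - δ_ρ]) + χ_{Σ^ρ}([f]^ρ)` holds, where `[f]^ρ` is computed
by subtracting an integral linear function `m₀` agreeing with `f` on `ρ` and pushing
down to the star fan. -/
def EhrhartRec : (n : ℕ) → (S : RationalFan n) → ((↥S.rays → ℤ) → ℤ) → Prop
  | 0, S, χ =>
      (∀ (f : ↥S.rays → ℤ) (m : Fin 0 → ℤ), χ (f + linPL S m) = χ f) ∧ χ 0 = 1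
  | (n + 1), S, χ =>
      (∀ (f : ↥S.rays → ℤ) (m : Fin (n + 1) → ℤ), χ (f + linPL S m) = χ f) ∧ χ 0 = 1 ∧
      ∀ ρ : ↥S.rays, ∃ (π : V (n + 1) →ₗ[ℝ] V n) (T : RationalFan n)
          (χT : (↥T.rays → ℤ) → ℤ),
        IsStarMap S (ρ : Set (V (n + 1))) π T ∧ IsUnimodular T ∧ EhrhartRec n T χT ∧
        ∀ f : ↥S.rays → ℤ, ∃ (m₀ : Fin (n + 1) → ℤ) (g : ↥T.rays → ℤ),
          pairZ m₀ (rayGen (ρ : Set (V (n + 1)))) = f ρ ∧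
          (∀ (ρ' : ↥S.rays) (ρT : ↥T.rays),
              π '' (ρ' : Set (V (n + 1))) = (ρT : Set (V n)) →
              g ρT = f ρ' - pairZ m₀ (rayGen (ρ' : Set (V (n + 1))))) ∧
          χ f = χ (f - courant S ρ) + χT g

/-- A unimodular fan is Ehrhart if it admits an Ehrhart function satisfying the
Ehrhart recursion (together, recursively, with all of its star fans). -/
def IsEhrhart {n : ℕ} (S : RationalFan n) : Prop :=
  IsUnimodular S ∧ ∃ χ : (↥S.rays → ℤ) → ℤ, EhrhartRec n S χ

/-- An integral piecewise-linear function on a fan (recorded as a function on all of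
`N_ℝ`, constrained on each cone of the fan). -/
def IsPLFun {n : ℕ} (S : RationalFan n) (φ : V n → ℝ) : Prop :=
  ∀ σ ∈ S.cones, ∃ m : Fin n → ℤ, ∀ v ∈ σ, φ v = pairR m v
open Polynomial in
theorem multiset_eq_of_pow_sums (s t : Multiset ℝ)
    (h : ∀ d : ℕ, (s.map fun x => x ^ d).sum = (t.map fun x => x ^ d).sum) : s = t := by
  classical
  have hp : ∀ p : ℝ[X], (s.map fun x => p.eval x).sum = (t.map fun x => p.eval x).sum := by
    intro p
    induction p using Polynomial.induction_on' with
    | add p q hp hq => simp only [Polynomial.eval_add, Multiset.sum_map_add, hp, hq]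
    | monomial d a => simp only [Polynomial.eval_monomial, Multiset.sum_map_mul_left, h]
  ext c
  let U : Finset ℝ := (s.toFinset ∪ t.toFinset).erase c
  let p : ℝ[X] := ∏ z ∈ U, (X - C z)
  have hpc : p.eval c ≠ 0 := by
    simp only [p, Polynomial.eval_prod, Finset.prod_ne_zero_iff]
    intro z hz
    have : z ≠ c := Finset.ne_of_mem_erase hz
    simp [sub_eq_zero, this.symm]
  have hpz : ∀ z, z ∈ s ∨ z ∈ t → p.eval z = if c = z then p.eval c else 0 := by
    intro z hz
    split_ifs with hc
    · rw [hc]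
    · simp only [p, Polynomial.eval_prod]
      apply Finset.prod_eq_zero (i := z)
      · simp [U, hz, Ne.symm hc]
      · simp
  have key : ∀ r : Multiset ℝ, (r.map fun z => if c = z then p.eval c else 0).sum
      = r.count c * p.eval c := by
    intro r
    induction r using Multiset.induction_on with
    | empty => simp
    | cons a r ih =>
      rw [Multiset.map_cons, Multiset.sum_cons, ih, Multiset.count_cons]
      split_ifs <;> push_cast <;> ring
  have h1 := hp p
  rw [Multiset.map_congr rfl (fun z hz => hpz z (Or.inl hz)),
    Multiset.map_congr rfl (fun z hz => hpz z (Or.inr hz)), key, key] at h1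
  exact_mod_cast mul_right_cancel₀ hpc h1

theorem pairR_smul' {n : ℕ} (m : Fin n → ℤ) (c : ℝ) (v : V n) :
    pairR m (c • v) = c * pairR m v := by
  simp only [pairR, Pi.smul_apply, smul_eq_mul, Finset.mul_sum]
  exact Finset.sum_congr rfl fun i _ => by ring

theorem multiset_eq_of_sum_exp {n k l : ℕ} (S : RationalFan n)
    (f : Fin k → (V n → ℝ)) (g : Fin l → (V n → ℝ))
    (hf : ∀ i, IsPLFun S (f i)) (hg : ∀ j, IsPLFun S (g j))
    (h : ∀ v ∈ S.support, (∑ i, Real.exp (f i v)) = ∑ j, Real.exp (g j v)) :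
    ∀ v ∈ S.support, (Finset.univ.val.map fun i : Fin k => f i v)
          = (Finset.univ.val.map fun j : Fin l => g j v) := by
  intro v hv
  obtain ⟨σ, hσ, hvσ⟩ : ∃ σ ∈ S.cones, v ∈ σ := by
    simpa [RationalFan.support] using hv
  have hmem : ∀ d : ℕ, (d : ℝ) • v ∈ σ := by
    intro d
    obtain ⟨s, rfl⟩ := S.rational σ hσ
    intro m hm
    rw [pairR_smul']
    exact mul_nonneg (Nat.cast_nonneg d) (hvσ m hm)
  have hsc : ∀ φ : V n → ℝ, IsPLFun S φ → ∀ d : ℕ,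
      Real.exp (φ ((d : ℝ) • v)) = Real.exp (φ v) ^ d := by
    intro φ hφ d
    obtain ⟨m, hm⟩ := hφ σ hσ
    rw [hm _ (hmem d), hm _ hvσ, pairR_smul', Real.exp_nat_mul]
  apply Multiset.map_injective Real.exp_injective
  apply multiset_eq_of_pow_sums
  intro d
  have h2 := h ((d : ℝ) • v) (by
    simp only [RationalFan.support, Set.mem_iUnion]
    exact ⟨σ, hσ, hmem d⟩)
  simp only [hsc _ (hf _), hsc _ (hg _)] at h2
  simpa only [Multiset.map_map, Function.comp_def, Finset.sum] using h2

/-- For PL functions `f₁,…,f_k, g₁,…,g_ℓ` on a rational fan `Σ`, the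
equality `∑ᵢ e^{fᵢ} = ∑ⱼ e^{gⱼ}` of functions on `|Σ|` holds if and only if for every
`v ∈ |Σ|` the multisets `{fᵢ(v)}` and `{gⱼ(v)}` coincide; in particular (when the
support is nonempty) this forces `k = ℓ`. -/
theorem sum_exp_eq_iff_multiset_eq {n k l : ℕ} (S : RationalFan n)
    (f : Fin k → (V n → ℝ)) (g : Fin l → (V n → ℝ))
    (hf : ∀ i, IsPLFun S (f i)) (hg : ∀ j, IsPLFun S (g j)) :
    ((∀ v ∈ S.support, (∑ i, Real.exp (f i v)) = ∑ j, Real.exp (g j v)) ↔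
      (∀ v ∈ S.support,
        (Finset.univ.val.map fun i : Fin k => f i v)
          = (Finset.univ.val.map fun j : Fin l => g j v))) ∧
    (S.support.Nonempty →
      (∀ v ∈ S.support, (∑ i, Real.exp (f i v)) = ∑ j, Real.exp (g j v)) →
      k = l) := by
  refine ⟨⟨multiset_eq_of_sum_exp S f g hf hg, ?_⟩, ?_⟩
  · intro h v hv
    have := congrArg (fun s : Multiset ℝ => (s.map Real.exp).sum) (h v hv)
    simpa only [Multiset.map_map, Function.comp_def, Finset.sum] using this
  · rintro ⟨v, hv⟩ h
    simpa using congrArg Multiset.card (multiset_eq_of_sum_exp S f g hf hg h v hv)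

end EhrhartFormalization
end

section
/- A one-dimensional unimodular fan Σ is Ehrhart if and only if the sum of its primitive ray generators vanishes: ∑_{ρ ∈ Σ(1)} u_ρ = 0. Moreover, if Σ is Ehrhart, then its Ehrhart polynomial is given by χ_Σ([f]) = 1 + ∑_{ρ ∈ Σ(1)} f(u_ρ) for every f ∈ PL(Σ). -/
open scoped BigOperators Pointwise

namespace EhrhartFormalization

theorem exists_realEquiv {n : ℕ} (b : Module.Basis (Fin n) ℤ (Fin n → ℤ)) :
    ∃ E : V n ≃ₗ[ℝ] V n, ∀ u, E (toR u) = toR (b.equivFun u) := by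
  classical
  set e := b.equivFun
  have key : ∀ (L : (Fin n → ℤ) →ₗ[ℤ] (Fin n → ℤ)) (u : Fin n → ℤ),
      Matrix.toLin' ((LinearMap.toMatrix' L).map (Int.castRingHom ℝ)) (toR u) = toR (L u) := by
    intro L u
    have h : L u = (LinearMap.toMatrix' L).mulVec u := by
      rw [← Matrix.toLin'_apply, Matrix.toLin'_toMatrix']
    rw [h, Matrix.toLin'_apply]
    ext i
    simp [Matrix.mulVec, dotProduct, toR]
  have h1 : LinearMap.toMatrix' e.toLinearMap * LinearMap.toMatrix' e.symm.toLinearMap = 1 := by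
    rw [← LinearMap.toMatrix'_comp]; simp
  have h2 : LinearMap.toMatrix' e.symm.toLinearMap * LinearMap.toMatrix' e.toLinearMap = 1 := by
    rw [← LinearMap.toMatrix'_comp]; simp
  refine ⟨Matrix.toLin'OfInv
    (M := (LinearMap.toMatrix' e.symm.toLinearMap).map (Int.castRingHom ℝ))
    (M' := (LinearMap.toMatrix' e.toLinearMap).map (Int.castRingHom ℝ)) ?_ ?_, ?_⟩
  · rw [← Matrix.map_mul, h2]; simp
  · rw [← Matrix.map_mul, h1]; simp
  · intro u
    exact key e.toLinearMap u

theorem E_basis {n : ℕ} {b : Module.Basis (Fin n) ℤ (Fin n → ℤ)} {E : V n ≃ₗ[ℝ] V n}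
    (hE : ∀ u, E (toR u) = toR (b.equivFun u)) (i : Fin n) :
    E (toR (b i)) = Pi.single i 1 := by
  classical
  rw [hE]
  ext j
  simp [toR, Finsupp.single_apply, Pi.single_apply, eq_comm]

theorem toR_ne {n : ℕ} (b : Module.Basis (Fin n) ℤ (Fin n → ℤ)) (i : Fin n) :
    toR (b i) ≠ 0 := by
  obtain ⟨E, hE⟩ := exists_realEquiv b
  intro h
  have := E_basis hE i
  rw [h, map_zero] at this
  simpa using congrFun this i

def rayOf {n : ℕ} (v : V n) : Set (V n) := {w | ∃ c : ℝ, 0 ≤ c ∧ w = c • v}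

theorem cone_cases {n : ℕ} {σ : Set (V (n+1))} (h : IsUnimodularCone σ) (hd : dimCone σ ≤ 1) :
    σ = {0} ∨ ∃ b : Module.Basis (Fin (n+1)) ℤ (Fin (n+1) → ℤ), σ = rayOf (toR (b 0)) := by
  classical
  obtain ⟨b, k, hk, hσ⟩ := h
  have hk1 : k ≤ 1 := by
    by_contra hk2
    push Not at hk2
    obtain ⟨E, hE⟩ := exists_realEquiv b
    have mem : ∀ i : Fin (n+1), (i : ℕ) < k → toR (b i) ∈ σ := by
      intro i hi
      rw [hσ]
      refine ⟨Pi.single i 1, ?_, ?_, ?_⟩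
      · intro j
        by_cases hj : j = i
        · subst hj; simp
        · simp [hj]
      · intro j hj
        have : j ≠ i := by rintro rfl; omega
        simp [this]
      · simp [Pi.single_apply]
    let i0 : Fin (n+1) := ⟨0, by omega⟩
    let i1 : Fin (n+1) := ⟨1, by omega⟩
    have h01 : i0 ≠ i1 := by simp [i0, i1]
    have m0 := Submodule.subset_span (R := ℝ) (mem i0 (by simp [i0]; omega))
    have m1 := Submodule.subset_span (R := ℝ) (mem i1 (by simp [i1]; omega))
    unfold dimCone at hd
    rw [finrank_le_one_iff] at hd
    obtain ⟨v, hv⟩ := hd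
    obtain ⟨c0, hc0⟩ := hv ⟨_, m0⟩
    obtain ⟨c1, hc1⟩ := hv ⟨_, m1⟩
    have e0 := congrArg (fun x => E x.1) hc0
    have e1 := congrArg (fun x => E x.1) hc1
    simp only [Submodule.coe_smul, map_smul, E_basis hE] at e0 e1
    have a := congrFun e0 i0
    have b' := congrFun e0 i1
    have c := congrFun e1 i1
    simp [h01, h01.symm] at a b' c
    rcases b' with h | h
    · simp [h] at a
    · simp [h] at c
  rcases Nat.le_one_iff_eq_zero_or_eq_one.1 hk1 with rfl | rfl
  · left
    rw [hσ]
    ext v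
    constructor
    · rintro ⟨c, -, hc, rfl⟩
      simp [hc]
    · rintro rfl
      exact ⟨0, by simp, by simp, by simp⟩
  · right
    refine ⟨b, ?_⟩
    rw [hσ]
    ext v
    constructor
    · rintro ⟨c, h0, hc, rfl⟩
      refine ⟨c 0, h0 0, ?_⟩
      rw [Fin.sum_univ_succ, Finset.sum_eq_zero, add_zero]
      intro i _
      rw [hc _ (by simp), zero_smul]
    · rintro ⟨c, h0, rfl⟩
      refine ⟨Pi.single 0 c, ?_, ?_, ?_⟩
      · intro j
        by_cases hj : j = 0
        · subst hj; simpa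
        · simp [hj]
      · intro j hj
        have : j ≠ 0 := by rintro rfl; simp at hj
        simp [this]
      · simp [Pi.single_apply]

theorem dim_zero {n : ℕ} : dimCone ({0} : Set (V n)) = 0 := by
  unfold dimCone
  rw [Submodule.span_zero_singleton]; simp

theorem dim_le {n : ℕ} {S : RationalFan n} (hdim : S.dim = 1) {σ} (h : σ ∈ S.cones) :
    dimCone σ ≤ 1 := by
  rw [← hdim]
  exact le_csSup (S.finite.image _).bddAbove ⟨σ, h, rfl⟩

theorem ray_form {n : ℕ} {S : RationalFan (n+1)} (hS : IsUnimodular S) {ρ} (h : ρ ∈ S.rays) :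
    ∃ b : Module.Basis (Fin (n+1)) ℤ (Fin (n+1) → ℤ), ρ = rayOf (toR (b 0)) := by
  rcases cone_cases (hS.2 _ h.1) h.2.le with h' | h'
  · have := h.2
    rw [h', dim_zero] at this
    omega
  · exact h'

theorem rayGen_eq {n : ℕ} {b : Module.Basis (Fin (n+1)) ℤ (Fin (n+1) → ℤ)} :
    rayGen (rayOf (toR (b 0))) = b 0 := by
  obtain ⟨E, hE⟩ := exists_realEquiv b
  have hgen : IsRayGenOf (rayOf (toR (b 0))) (b 0) := by
    refine ⟨⟨1, by simp, by simp⟩, b.ne_zero 0, ?_⟩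
    rintro w ⟨c, hc, hw⟩
    have h := congrArg E hw
    rw [map_smul, E_basis hE, hE] at h
    have h0 := congrFun h 0
    simp [toR] at h0
    have hpos : 0 ≤ b.repr w 0 := by
      have : (0:ℝ) ≤ (b.repr w 0 : ℤ) := by rw [h0]; exact hc
      exact_mod_cast this
    refine ⟨(b.repr w 0).toNat, ?_⟩
    rw [← natCast_zsmul, Int.toNat_of_nonneg hpos]
    apply b.equivFun.injective
    ext i
    refine Fin.cases ?_ (fun j => ?_) i
    · rw [map_smul]; simp
    · have hj := congrFun h j.succ
      simp [toR] at hj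
      rw [map_smul]; simp [hj]
  have hex : ∃ u, IsRayGenOf (rayOf (toR (b 0))) u := ⟨_, hgen⟩
  have hr : IsRayGenOf (rayOf (toR (b 0))) (rayGen (rayOf (toR (b 0)))) := by
    unfold rayGen
    rw [dif_pos hex]
    exact hex.choose_spec
  obtain ⟨c, hc⟩ := hgen.2.2 _ hr.1
  obtain ⟨d, hd⟩ := hr.2.2 _ hgen.1
  have h1 := congrArg (fun x => b.repr x 0) hd
  rw [hc, ← natCast_zsmul, ← natCast_zsmul, map_smul, map_smul] at h1
  simp at h1
  have h2 : d * c = 1 := by exact_mod_cast h1.symm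
  have h3 : c = 1 := Nat.eq_one_of_mul_eq_one_left h2
  rw [hc, h3, one_smul]

theorem nbhd_image {n m : ℕ} {S : RationalFan (n+1)} (hS : IsUnimodular S) (hdim : S.dim = 1)
    {ρ} (h : ρ ∈ S.rays) (π : V (n+1) →ₗ[ℝ] V m) (hπ : LinearMap.ker π = Submodule.span ℝ ρ) :
    (Set.image π) '' S.nbhd ρ = {{0}} := by
  have hzero : ∀ v ∈ ρ, π v = 0 := fun v hv => by
    rw [← LinearMap.mem_ker, hπ]; exact Submodule.subset_span hv
  obtain ⟨b, hb⟩ := ray_form hS h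
  have hmem : ∀ τ ∈ S.cones, (0 : V (n+1)) ∈ τ := by
    intro τ hτ
    rcases cone_cases (hS.2 _ hτ) (dim_le hdim hτ) with h' | ⟨b', h'⟩
    · simp [h']
    · rw [h']; exact ⟨0, le_rfl, by simp⟩
  have hmax : ∀ σ ∈ S.cones, ρ ⊆ σ → σ ⊆ ρ := by
    intro σ hσ hs
    have h1 : toR (b 0) ∈ σ := hs (by rw [hb]; exact ⟨1, by simp, by simp⟩)
    rcases cone_cases (hS.2 _ hσ) (dim_le hdim hσ) with h' | ⟨b', h'⟩
    · rw [h'] at h1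
      exact absurd h1 (toR_ne b 0)
    · rw [h'] at h1
      obtain ⟨c, hc, hcb⟩ := h1
      have hc0 : c ≠ 0 := by
        rintro rfl
        exact toR_ne b 0 (by simpa using hcb)
      rw [h', hb]
      rintro v ⟨d, hd, rfl⟩
      refine ⟨d / c, by positivity, ?_⟩
      rw [hcb, smul_smul, div_mul_cancel₀ _ hc0]
  have himg : ∀ τ ∈ S.cones, τ ⊆ ρ → π '' τ = {0} := by
    intro τ hτ hs
    ext w
    constructor
    · rintro ⟨v, hv, rfl⟩
      exact hzero v (hs hv)
    · rintro rfl
      exact ⟨0, hmem τ hτ, map_zero _⟩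
  ext X
  constructor
  · rintro ⟨τ, ⟨hτ, σ, hσ, h1, h2⟩, rfl⟩
    exact himg τ hτ (h2.trans (hmax σ hσ h1))
  · rintro rfl
    exact ⟨ρ, ⟨h.1, ρ, h.1, subset_rfl, subset_rfl⟩, himg ρ h.1 subset_rfl⟩

theorem rays_empty {n : ℕ} {T : RationalFan n} (hT : T.cones = {{0}}) : IsEmpty ↥T.rays := by
  constructor
  rintro ⟨ρ, h1, h2⟩
  rw [hT] at h1
  rw [Set.mem_singleton_iff.1 h1, dim_zero] at h2
  omega

theorem rec_zero {n : ℕ} {T : RationalFan n} {χ} (h : EhrhartRec n T χ) : χ 0 = 1 := by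
  cases n with
  | zero => exact h.2
  | succ n => exact h.2.1

theorem rec_inv {n : ℕ} {T : RationalFan n} {χ} (h : EhrhartRec n T χ) (f m) :
    χ (f + linPL T m) = χ f := by
  cases n with
  | zero => exact h.1 f m
  | succ n => exact h.1 f m

theorem rec_step {n : ℕ} {S : RationalFan (n+1)} (hS : IsUnimodular S) (hdim : S.dim = 1)
    {χ} (h : EhrhartRec (n+1) S χ) (ρ : ↥S.rays) (f) : χ f = χ (f - courant S ρ) + 1 := by
  obtain ⟨π, T, χT, hst, -, hT, hf⟩ := h.2.2 ρ
  obtain ⟨m₀, g, -, -, hg⟩ := hf f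
  have : IsEmpty ↥T.rays := rays_empty (by
    rw [hst.2.2.2.2, nbhd_image hS hdim ρ.2 π hst.2.2.2.1])
  rw [hg, Subsingleton.elim g 0, rec_zero hT]

theorem rays_finite {n : ℕ} (S : RationalFan n) : S.rays.Finite :=
  S.finite.subset fun _ h => h.1

theorem courant_eq {n : ℕ} {S : RationalFan n} [DecidableEq ↥S.rays] (ρ : ↥S.rays) :
    courant S ρ = Pi.single ρ 1 := by
  ext ρ'
  simp only [courant, Pi.single_apply]
  congr

theorem rec_formula {n : ℕ} {S : RationalFan (n+1)} (hS : IsUnimodular S) (hdim : S.dim = 1)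
    {χ} (h : EhrhartRec (n+1) S χ) (f) : χ f = 1 + ∑ᶠ ρ : ↥S.rays, f ρ := by
  classical
  haveI : Fintype ↥S.rays := (rays_finite S).fintype
  rw [finsum_eq_sum_of_fintype]
  have up : ∀ (ρ : ↥S.rays) (f : ↥S.rays → ℤ) (k : ℤ), χ (f + Pi.single ρ k) = χ f + k := by
    intro ρ f k
    have key : ∀ g, χ (g + Pi.single ρ 1) = χ g + 1 := fun g => by
      rw [rec_step hS hdim h ρ, courant_eq, add_sub_cancel_right]
    induction k using Int.induction_on with
    | zero => simp
    | succ k ih => rw [Pi.single_add, ← add_assoc, key, ih]; ring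
    | pred k ih =>
      have := key (f + Pi.single ρ (-(k:ℤ) - 1))
      rw [add_assoc, ← Pi.single_add, sub_add_cancel, ih] at this
      linarith
  have key : ∀ s : Finset ↥S.rays, χ (∑ ρ ∈ s, Pi.single ρ (f ρ)) = 1 + ∑ ρ ∈ s, f ρ := by
    intro s
    induction s using Finset.induction_on with
    | empty => simpa using rec_zero h
    | insert a s ha ih =>
      rw [Finset.sum_insert ha, Finset.sum_insert ha, add_comm (Pi.single _ _), up, ih]; ring
  have := key Finset.univ
  rwa [Finset.univ_sum_single] at this

def pointFan (n : ℕ) : RationalFan n where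
  cones := {{0}}
  finite := Set.finite_singleton _
  rational := by
    classical
    rintro σ rfl
    refine ⟨Finset.univ.image (fun i => Pi.single i 1) ∪
      Finset.univ.image (fun i => Pi.single i (-1)), ?_⟩
    ext v
    constructor
    · rintro rfl m _
      simp [pairR]
    · intro h
      ext i
      have h1 := h (Pi.single i 1) (by simp)
      have h2 := h (Pi.single i (-1)) (by simp)
      simp [pairR, Pi.single_apply] at h1 h2
      simp; linarith
  face_mem := by
    rintro σ rfl τ ⟨m, -, rfl⟩
    ext v
    simp only [Set.mem_singleton_iff, Set.mem_setOf_eq, Set.mem_sep_iff]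
    constructor
    · exact fun h => h.1
    · rintro rfl
      exact ⟨rfl, by simp [pairR]⟩
  inter_face := by
    rintro σ rfl τ rfl
    exact ⟨0, by simp [pairR], by simp [pairR]⟩

theorem pointFan_unimodular (n : ℕ) : IsUnimodular (pointFan n) := by
  refine ⟨rfl, ?_⟩
  rintro σ rfl
  refine ⟨Pi.basisFun ℤ (Fin n), 0, Nat.zero_le _, ?_⟩
  ext v
  constructor
  · rintro rfl
    exact ⟨0, by simp, by simp, by simp⟩
  · rintro ⟨c, -, hc, rfl⟩
    simp [hc]

theorem pointFan_rec (n : ℕ) : EhrhartRec n (pointFan n) (fun _ => 1) := by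
  haveI := rays_empty (T := pointFan n) rfl
  cases n with
  | zero => exact ⟨fun _ _ => rfl, rfl⟩
  | succ n => exact ⟨fun _ _ => rfl, rfl, fun ρ => (IsEmpty.false ρ).elim⟩

theorem exists_proj {n : ℕ} (b : Module.Basis (Fin (n+1)) ℤ (Fin (n+1) → ℤ)) :
    ∃ π : V (n+1) →ₗ[ℝ] V n, Function.Surjective π ∧
  (∀ u : Fin (n+1) → ℤ, ∃ w : Fin n → ℤ, π (toR u) = toR w) ∧
  (∀ w : Fin n → ℤ, ∃ u : Fin (n+1) → ℤ, π (toR u) = toR w) ∧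
  LinearMap.ker π = Submodule.span ℝ (rayOf (toR (b 0))) := by
  obtain ⟨E, hE⟩ := exists_realEquiv b
  let π : V (n+1) →ₗ[ℝ] V n := (LinearMap.funLeft ℝ ℝ Fin.succ) ∘ₗ E.toLinearMap
  have hπ : ∀ v i, π v i = E v i.succ := fun v i => rfl
  refine ⟨π, ?_, ?_, ?_, ?_⟩
  · intro w
    refine ⟨E.symm (Fin.cons 0 w), ?_⟩
    ext i
    simp [hπ]
  · intro u
    refine ⟨fun i => b.equivFun u i.succ, ?_⟩
    ext i
    rw [hπ, hE]; rfl
  · intro w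
    refine ⟨b.equivFun.symm (Fin.cons 0 w), ?_⟩
    ext i
    rw [hπ, hE, LinearEquiv.apply_symm_apply]; simp [toR]
  · apply le_antisymm
    · intro v hv
      have : v = (E v 0) • toR (b 0) := by
        apply E.injective
        rw [map_smul, E_basis hE]
        ext i
        refine Fin.cases ?_ (fun j => ?_) i
        · simp
        · have := congrFun (LinearMap.mem_ker.1 hv) j
          rw [hπ] at this
          simp [this]
      rw [this]
      exact Submodule.smul_mem _ _ (Submodule.subset_span ⟨1, by simp, by simp⟩)
    · rw [Submodule.span_le]
      rintro v ⟨c, -, rfl⟩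
      rw [SetLike.mem_coe, LinearMap.mem_ker]
      ext i
      rw [hπ, map_smul, E_basis hE]
      simp

theorem exists_dual {n : ℕ} (b : Module.Basis (Fin (n+1)) ℤ (Fin (n+1) → ℤ)) (k : ℤ) :
    ∃ m, pairZ m (b 0) = k := by
  classical
  refine ⟨fun i => k * b.coord 0 (Pi.single i 1), ?_⟩
  have h : b.coord 0 (b 0) = 1 := by simp
  have h2 : b 0 = ∑ i, (b 0 i) • (Pi.single i 1 : Fin (n+1) → ℤ) := by
    conv_lhs => rw [← Finset.univ_sum_single (b 0)]
    refine Finset.sum_congr rfl fun i _ => ?_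
    ext j
    simp [Pi.single_apply]
  rw [h2, map_sum] at h
  simp only [map_smul, smul_eq_mul] at h
  unfold pairZ
  calc _ = k * ∑ i, b 0 i * b.coord 0 (Pi.single i 1) := by
        rw [Finset.mul_sum]; exact Finset.sum_congr rfl fun i _ => by ring
    _ = k := by rw [h, mul_one]

theorem pairZ_sum {n : ℕ} {ι : Type*} (s : Finset ι) (m : Fin n → ℤ) (u : ι → Fin n → ℤ) :
    ∑ x ∈ s, pairZ m (u x) = pairZ m (∑ x ∈ s, u x) := by
  unfold pairZ
  rw [Finset.sum_comm]
  simp [Finset.mul_sum]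

theorem one_dimensional_ehrhart_iff {n : ℕ} (S : RationalFan n)
    (hS : IsUnimodular S) (hdim : S.dim = 1) :
    (IsEhrhart S ↔ (∑ᶠ ρ ∈ S.rays, rayGen ρ) = (0 : Fin n → ℤ)) ∧
    (IsEhrhart S →
      ∀ χ : (↥S.rays → ℤ) → ℤ, EhrhartRec n S χ →
        ∀ f : ↥S.rays → ℤ, χ f = 1 + ∑ᶠ ρ : ↥S.rays, f ρ) := by
  classical
  cases n with
  | zero =>
    exfalso
    have h0 : ∀ σ : Set (V 0), dimCone σ = 0 := fun σ => by
      unfold dimCone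
      exact Module.finrank_zero_of_subsingleton
    have : S.dim ≤ 0 := by
      unfold RationalFan.dim
      apply csSup_le (Set.Nonempty.image _ ⟨_, hS.1⟩)
      rintro _ ⟨σ, -, rfl⟩
      exact (h0 σ).le
    omega
  | succ n =>
  haveI : Fintype ↥S.rays := (rays_finite S).fintype
  refine ⟨?_, fun _ χ h f => rec_formula hS hdim h f⟩
  have hsum : (∑ᶠ ρ ∈ S.rays, rayGen ρ) = ∑ ρ : ↥S.rays, rayGen ρ.1 := by
    rw [← finsum_eq_sum_of_fintype, ← finsum_set_coe_eq_finsum_mem]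
  rw [hsum]
  constructor
  · rintro ⟨-, χ, h⟩
    have hm : ∀ m, pairZ m (∑ ρ : ↥S.rays, rayGen ρ.1) = 0 := by
      intro m
      have h1 := rec_inv h 0 m
      rw [zero_add, rec_zero h, rec_formula hS hdim h, finsum_eq_sum_of_fintype] at h1
      rw [← pairZ_sum]
      simp only [linPL] at h1
      linarith
    ext i
    have := hm (Pi.single i 1)
    simpa [pairZ, Pi.single_apply] using this
  · intro h0
    refine ⟨hS, fun f => 1 + ∑ ρ, f ρ, ?_, by simp, ?_⟩
    · intro f m
      have : ∑ ρ, linPL S m ρ = 0 := by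
        simp only [linPL]
        rw [pairZ_sum, h0]; simp [pairZ]
      simp [Finset.sum_add_distrib, this]
    · intro ρ
      obtain ⟨b, hb⟩ := ray_form hS ρ.2
      obtain ⟨π, p1, p2, p3, p4⟩ := exists_proj b
      rw [← hb] at p4
      refine ⟨π, pointFan n, fun _ => 1,
        ⟨p1, p2, p3, p4, (nbhd_image hS hdim ρ.2 π p4).symm⟩,
        pointFan_unimodular n, pointFan_rec n, fun f => ?_⟩
      haveI := rays_empty (T := pointFan n) rfl
      obtain ⟨m, hm⟩ := exists_dual b (f ρ)
      refine ⟨m, 0, ?_, fun _ ρT => (IsEmpty.false ρT).elim, ?_⟩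
      · rw [hb, rayGen_eq, hm]
      · simp [courant_eq, Finset.sum_sub_distrib, add_comm]

end EhrhartFormalization
end
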